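/- For every Laurent polynomial f with complex coefficients (viewed as a function on ℂ∖{0}) and every z ∈ ℂ with z ≠ 0 and z^{2N} ≠ 1, one has (L(N)(L(N)f))(z) − N(α+β+1)·(L(N)f)(z) = z²·f″(z) + C(z)·f′(z) + z·Σ_{k=0}^{N−1} A_k′(z;N)·(f(q^k/z) − f(z)), where C(z) = z·(1 + N(α+β+1) + 2N(α+β+1+(α−β)z^N)/(z^{2N}−1)) and A_k′(z;N) denotes the derivative of A_k(·;N) at z. -/

import Mathlib

open Finset

/-- Monic OPUC associated to a sequence of (real) Verblunsky parameters. -/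
noncomputable def Phi (c : ℕ → ℝ) : ℕ → ℂ → ℂ
  | 0, _ => 1
  | n + 1, z => z * Phi c n z - (c n : ℂ) * z ^ n * Phi c n z⁻¹

/-- CMV Laurent polynomials: ψ_{2m} z = z^m Φ_{2m}(1/z), ψ_{2m+1} z = z^{-m} Φ_{2m+1}(z). -/
noncomputable def psi (c : ℕ → ℝ) (n : ℕ) (z : ℂ) : ℂ :=
  if Even n then z ^ (n / 2) * Phi c n z⁻¹
  else z ^ (-((n / 2 : ℕ) : ℤ)) * Phi c n z

/-- Verblunsky parameters of the Jacobi OPUC. -/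
noncomputable def jacobiA (α β : ℝ) (n : ℕ) : ℝ :=
  -(α + 1 / 2 + (-1 : ℝ) ^ (n + 1) * (β + 1 / 2)) / (n + α + β + 2)

/-- Sieved Verblunsky parameters: a_n(N) = a_{k-1} if n = N k - 1 (k ≥ 1), 0 otherwise. -/
noncomputable def sievedA (α β : ℝ) (N n : ℕ) : ℝ :=
  if N ∣ (n + 1) then jacobiA α β ((n + 1) / N - 1) else 0

/-- The primitive N-th root of unity q = exp(2πi/N). -/
noncomputable def qN (N : ℕ) : ℂ := Complex.exp (2 * Real.pi * Complex.I / N)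

/-- The coefficients A_k(z;N) of the Dunkl-type operator L(N). -/
noncomputable def Acoef (α β : ℝ) (N k : ℕ) (z : ℂ) : ℂ :=
  if Even N then
    ((α : ℂ) + β + 1 + (-1 : ℂ) ^ k * ((α : ℂ) - β)) * z ^ 2 / (qN N ^ k - z ^ 2)
  else
    (((α : ℂ) + β + 1) * z ^ 2 +
        (if Even k then qN N ^ ((k : ℤ) / 2) else qN N ^ (((k : ℤ) - (N : ℤ)) / 2)) *
          ((α : ℂ) - β) * z) /
      (qN N ^ k - z ^ 2)

/-- B(z) = N((α+β+1) z^{2N} + (α-β) z^N)/(z^{2N} - 1). -/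
noncomputable def Bfun (α β : ℝ) (N : ℕ) (z : ℂ) : ℂ :=
  (N : ℂ) * (((α : ℂ) + β + 1) * z ^ (2 * N) + ((α : ℂ) - β) * z ^ N) / (z ^ (2 * N) - 1)

/-- The Dunkl-type operator L(N). -/
noncomputable def Lop (α β : ℝ) (N : ℕ) (f : ℂ → ℂ) : ℂ → ℂ := fun z =>
  z * deriv f z + ∑ k ∈ Finset.range N, Acoef α β N k z * (f (qN N ^ k / z) - f z)

/-- A function ℂ∖{0} → ℂ is a Laurent polynomial. -/
def IsLaurentPoly (f : ℂ → ℂ) : Prop :=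
  ∃ (m : ℕ) (p : Polynomial ℂ), ∀ z : ℂ, z ≠ 0 → f z = Polynomial.eval z p / z ^ m

/-- Sieved Jacobi polynomial of the first kind, as a function of z (x = z + 1/z). -/
noncomputable def sievP (α β : ℝ) (N n : ℕ) (z : ℂ) : ℂ :=
  psi (sievedA α β N) (2 * n) z
    + (1 + (sievedA α β N (2 * n - 1) : ℂ)) * psi (sievedA α β N) (2 * n - 1) z

/-- χ_n(z) = (z - 1/z) Q_{n-1}(x(z)), with Q the sieved Jacobi polynomial of 2nd kind. -/
noncomputable def sievChi (α β : ℝ) (N n : ℕ) (z : ℂ) : ℂ :=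
  -psi (sievedA α β N) (2 * n) z
    + (1 - (sievedA α β N (2 * n - 1) : ℂ)) * psi (sievedA α β N) (2 * n - 1) z

lemma aux_q_prim (N : ℕ) (hN : 1 ≤ N) : IsPrimitiveRoot (qN N) N :=
  Complex.isPrimitiveRoot_exp N (by omega)

lemma aux_shift (N : ℕ) (g : ℕ → ℂ) (hg : ∀ j, g (j + N) = g j) (m : ℕ) :
    ∑ j ∈ Finset.range N, g (j + m) = ∑ j ∈ Finset.range N, g j := by
  induction m with
  | zero => simp
  | succ m ih =>
    rw [← ih]
    have h1 := Finset.sum_range_succ (fun j => g (j + m)) N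
    have h2 := Finset.sum_range_succ' (fun j => g (j + m)) N
    have h3 : g (N + m) = g (0 + m) := by
      rw [add_comm N m, hg, zero_add]
    have h4 : ∀ j, g (j + 1 + m) = g (j + (m + 1)) := fun j => by congr 1; ring
    simp only [h4] at h2
    rw [h1, h3] at h2
    exact (add_right_cancel h2).symm

lemma aux_S (N : ℕ) (hN : 1 ≤ N) (x w : ℂ) (hx : IsPrimitiveRoot x N) (hw : w ^ N ≠ 1) :
    ∑ j ∈ Finset.range N, w / (x ^ j - w) = - (N * w ^ N / (w ^ N - 1)) := by
  have hw' : w ^ N - 1 ≠ 0 := sub_ne_zero.2 hw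
  have key : ∀ j, w / (x ^ j - w)
      = -(∑ i ∈ Finset.range N, (x ^ i) ^ j * w ^ (N - 1 - i)) * w / (w ^ N - 1) := by
    intro j
    have hu : (x ^ j) ^ N = 1 := by rw [← pow_mul, mul_comm, pow_mul, hx.pow_eq_one, one_pow]
    have hne : x ^ j - w ≠ 0 := by
      intro h
      rw [sub_eq_zero] at h
      exact hw (h ▸ hu)
    have h := (Commute.all (x ^ j) w).geom_sum₂_mul N
    rw [hu] at h
    have h2 : ∀ i, (x ^ i) ^ j = (x ^ j) ^ i := fun i => by rw [← pow_mul, ← pow_mul, mul_comm]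
    simp only [h2]
    rw [div_eq_div_iff hne hw']
    linear_combination w * h
  simp only [key]
  rw [← Finset.sum_div, ← Finset.sum_mul, Finset.sum_neg_distrib, Finset.sum_comm]
  have h0 : ∀ i ∈ Finset.range N, i ≠ 0 →
      ∑ j ∈ Finset.range N, (x ^ i) ^ j * w ^ (N - 1 - i) = 0 := by
    intro i hi hi0
    rw [← Finset.sum_mul]
    have h1 : x ^ i ≠ 1 := hx.pow_ne_one_of_pos_of_lt hi0 (Finset.mem_range.1 hi)
    have h2 := geom_sum_mul (x ^ i) N
    rw [← pow_mul, mul_comm i N, pow_mul, hx.pow_eq_one, one_pow, sub_self] at h2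
    rcases mul_eq_zero.1 h2 with h | h
    · rw [h, zero_mul]
    · exact absurd (sub_eq_zero.1 h) h1
  rw [Finset.sum_eq_single_of_mem 0 (Finset.mem_range.2 (by omega)) h0]
  obtain ⟨n, rfl⟩ : ∃ n, N = n + 1 := ⟨N - 1, by omega⟩
  simp
  ring

lemma aux_A_even (α β : ℝ) (N k : ℕ) (hE : Even N) (z : ℂ) : Acoef α β N k z =
    ((α : ℂ) + β + 1 + (-1 : ℂ) ^ k * ((α : ℂ) - β)) * z ^ 2 / (qN N ^ k - z ^ 2) := by
  rw [Acoef, if_pos hE]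

lemma aux_r (n : ℕ) (hq : qN (2 * n + 1) ^ (2 * n + 1) = 1) (k : ℕ) :
    (if Even k then qN (2 * n + 1) ^ ((k : ℤ) / 2)
      else qN (2 * n + 1) ^ (((k : ℤ) - ((2 * n + 1 : ℕ) : ℤ)) / 2))
      = (qN (2 * n + 1) ^ (n + 1)) ^ k := by
  have hq0 : qN (2 * n + 1) ≠ 0 := Complex.exp_ne_zero _
  generalize qN (2 * n + 1) = q at *
  rcases Nat.even_or_odd' k with ⟨i, rfl | rfl⟩
  · rw [if_pos (by simp)]
    have : ((2 * i : ℕ) : ℤ) / 2 = i := by omega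
    rw [this, zpow_natCast, ← pow_mul]
    have : (n + 1) * (2 * i) = (2 * n + 1) * i + i := by ring
    rw [this, pow_add, pow_mul, hq, one_pow, one_mul]
  · rw [if_neg (by simp)]
    have : (((2 * i + 1 : ℕ) : ℤ) - ((2 * n + 1 : ℕ) : ℤ)) / 2 = (i : ℤ) - n := by omega
    rw [this, zpow_sub₀ hq0, zpow_natCast, zpow_natCast, div_eq_iff (pow_ne_zero _ hq0),
      ← pow_mul, ← pow_add]
    have : (n + 1) * (2 * i + 1) + n = (2 * n + 1) * (i + 1) + i := by ring
    rw [this, pow_add, pow_mul, hq, one_pow, one_mul]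

/-- Odd case: there is a primitive `N`-th root `r` with `r ^ 2 = q`. -/
lemma aux_A_odd (α β : ℝ) (N : ℕ) (hO : ¬ Even N) : ∃ r : ℂ, IsPrimitiveRoot r N ∧
    r ^ 2 = qN N ∧ ∀ k z, Acoef α β N k z =
    (((α : ℂ) + β + 1) * z ^ 2 + r ^ k * ((α : ℂ) - β) * z) / ((r ^ k) ^ 2 - z ^ 2) := by
  obtain ⟨n, rfl⟩ : Odd N := Nat.not_even_iff_odd.1 hO
  have hp := aux_q_prim (2 * n + 1) (by omega)
  have h2 : (qN (2 * n + 1) ^ (n + 1)) ^ 2 = qN (2 * n + 1) := by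
    rw [← pow_mul, show (n + 1) * 2 = (2 * n + 1) + 1 by ring, pow_succ, hp.pow_eq_one, one_mul]
  refine ⟨qN (2 * n + 1) ^ (n + 1), hp.pow_of_coprime _ ?_, h2, ?_⟩
  · have h : Nat.Coprime (n + 1) (2 * (n + 1) - 1) := by
      rw [Nat.coprime_iff_gcd_eq_one]
      apply Nat.dvd_one.1
      have h1 := Nat.gcd_dvd_left (n + 1) (2 * (n + 1) - 1)
      have h2 := Nat.gcd_dvd_right (n + 1) (2 * (n + 1) - 1)
      have h3 := Nat.dvd_sub (h1.mul_left 2) h2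
      rwa [show 2 * (n + 1) - (2 * (n + 1) - 1) = 1 by omega] at h3
    rwa [show 2 * (n + 1) - 1 = 2 * n + 1 by omega] at h
  · intro k z
    rw [Acoef, if_neg hO, aux_r n hp.pow_eq_one]
    congr 2
    rw [← pow_mul, mul_comm k 2, pow_mul, h2]

lemma aux_periodic (α β : ℝ) (N k : ℕ) (hN : 1 ≤ N) (z : ℂ) :
    Acoef α β N (k + N) z = Acoef α β N k z := by
  by_cases hE : Even N
  · rw [aux_A_even _ _ _ _ hE, aux_A_even _ _ _ _ hE, pow_add, pow_add, hE.neg_one_pow,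
      (aux_q_prim N hN).pow_eq_one]
    simp
  · obtain ⟨r, hr, h2, h⟩ := aux_A_odd α β N hE
    rw [h, h, pow_add, hr.pow_eq_one]
    simp

lemma aux_ne (N k : ℕ) (hN : 1 ≤ N) (z : ℂ) (hz2 : z ^ (2 * N) ≠ 1) : qN N ^ k - z ^ 2 ≠ 0 := by
  intro h
  rw [sub_eq_zero] at h
  apply hz2
  rw [pow_mul, ← h, ← pow_mul, mul_comm, pow_mul, (aux_q_prim N hN).pow_eq_one, one_pow]

lemma aux_sum (α β : ℝ) (N : ℕ) (hN : 1 ≤ N) (z : ℂ) (hz2 : z ^ (2 * N) ≠ 1) :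
    ∑ k ∈ Finset.range N, Acoef α β N k z = - Bfun α β N z := by
  have hp := aux_q_prim N hN
  by_cases hE : Even N
  · obtain ⟨M, hM⟩ := hE.two_dvd
    have hM1 : 1 ≤ M := by omega
    have hw : (z ^ 2) ^ N ≠ 1 := by rwa [← pow_mul]
    have hwM : ((z ^ 2) ^ M) ^ 2 ≠ 1 := by
      rwa [← pow_mul, mul_comm M 2, ← hM]
    have h1 := aux_S N hN _ _ hp hw
    have hp2 : IsPrimitiveRoot (qN N ^ 2) M := hp.pow (by omega) (by omega)
    have h2 := aux_S M hM1 _ (z ^ 2) hp2 (fun h => hwM (by rw [h, one_pow]))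
    have split : ∀ g : ℕ → ℂ, ∑ j ∈ Finset.range (2 * M), (-1 : ℂ) ^ j * g j
        = 2 * ∑ j ∈ Finset.range M, g (2 * j) - ∑ j ∈ Finset.range (2 * M), g j := by
      intro g
      clear * -
      induction M with
      | zero => simp
      | succ M ih =>
        rw [show 2 * (M + 1) = 2 * M + 1 + 1 by ring]
        simp only [Finset.sum_range_succ, ih]
        simp [pow_succ, pow_mul]
        ring
    have h3 := split (fun j => z ^ 2 / (qN N ^ j - z ^ 2))
    rw [← hM] at h3
    simp only [pow_mul (qN N)] at h3
    rw [h1, h2] at h3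
    have : ∀ k ∈ Finset.range N, Acoef α β N k z = ((α : ℂ) + β + 1) * (z ^ 2 / (qN N ^ k - z ^ 2))
      + ((α : ℂ) - β) * ((-1) ^ k * (z ^ 2 / (qN N ^ k - z ^ 2))) := by
      intro k _
      rw [aux_A_even _ _ _ _ hE]
      ring
    rw [Finset.sum_congr rfl this, Finset.sum_add_distrib, ← Finset.mul_sum, ← Finset.mul_sum,
      h1, h3, Bfun]
    have e1 : (z ^ 2) ^ N = (z ^ N) ^ 2 := by ring
    have e2 : z ^ (2 * N) = (z ^ N) ^ 2 := by ring
    have e3 : (z ^ 2) ^ M = z ^ N := by rw [← pow_mul, hM]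
    have e4 : (N : ℂ) = 2 * M := by rw [hM]; push_cast; ring
    rw [e2] at hz2
    rw [e1, e2, e3, e4]
    generalize z ^ N = t at *
    have d1 : t - 1 ≠ 0 := fun h => hz2 (by rw [sub_eq_zero.1 h, one_pow])
    have d2 : t ^ 2 - 1 ≠ 0 := sub_ne_zero.2 hz2
    have d3 : t + 1 ≠ 0 := fun h => d2 (by linear_combination (t - 1) * h)
    have e5 : t ^ 2 - 1 = (t - 1) * (t + 1) := by ring
    rw [e5]
    field_simp
    ring
  · obtain ⟨r, hr, h2, h⟩ := aux_A_odd α β N hE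
    have hw : (z ^ 2) ^ N ≠ 1 := by rwa [← pow_mul]
    have hO : Odd N := Nat.not_even_iff_odd.1 hE
    have e2 : z ^ (2 * N) = (z ^ N) ^ 2 := by ring
    have h1 := aux_S N hN _ _ hp hw
    have hz2' := hz2
    rw [e2] at hz2'
    have d1 : z ^ N - 1 ≠ 0 := fun h => hz2' (by rw [sub_eq_zero.1 h, one_pow])
    have d2 : (z ^ N) ^ 2 - 1 ≠ 0 := sub_ne_zero.2 hz2'
    have d3 : z ^ N + 1 ≠ 0 := fun h => d2 (by linear_combination (z ^ N - 1) * h)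
    have h3 := aux_S N hN r z hr (sub_ne_zero.1 d1)
    have h4 := aux_S N hN r (-z) hr (by
      rw [hO.neg_pow]; intro h; exact d3 (by linear_combination -h))
    have : ∀ k ∈ Finset.range N, Acoef α β N k z = ((α : ℂ) + β + 1) * (z ^ 2 / (qN N ^ k - z ^ 2))
      + ((α : ℂ) - β) / 2 * (z / (r ^ k - z) - (-z) / (r ^ k - (-z))) := by
      intro k _
      have hk := aux_ne N k hN z hz2
      have e : qN N ^ k = (r ^ k) ^ 2 := by rw [← h2]; ring
      rw [e] at hk
      rw [h, e]
      generalize r ^ k = x at *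
      have n1 : x - z ≠ 0 := fun h => hk (by linear_combination (x + z) * h)
      have n2 : x + z ≠ 0 := fun h => hk (by linear_combination (x - z) * h)
      rw [sub_neg_eq_add, show x ^ 2 - z ^ 2 = (x - z) * (x + z) by ring]
      field_simp
      ring
    rw [Finset.sum_congr rfl this, Finset.sum_add_distrib, ← Finset.mul_sum, ← Finset.mul_sum,
      Finset.sum_sub_distrib, h1, h3, h4, Bfun, hO.neg_pow]
    have e1 : (z ^ 2) ^ N = (z ^ N) ^ 2 := by ring
    rw [e1, e2]
    generalize z ^ N = t at *
    have e5 : t ^ 2 - 1 = (t - 1) * (t + 1) := by ring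
    have e6 : -t - 1 = - (t + 1) := by ring
    rw [e5, e6]
    field_simp
    ring

lemma aux_cross (α β : ℝ) (N : ℕ) (hN : 1 ≤ N) (z : ℂ) (hz : z ≠ 0) (hz2 : z ^ (2 * N) ≠ 1)
    (m : ℕ) (hm : m ≠ 0) (hmN : m < N) :
    ∑ j ∈ Finset.range N, Acoef α β N j z * Acoef α β N (j + m) (qN N ^ j / z) = 0 := by
  have hp := aux_q_prim N hN
  have hqm : qN N ^ m ≠ 1 := hp.pow_ne_one_of_pos_of_lt hm hmN
  have hq0 : qN N ≠ 0 := Complex.exp_ne_zero _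
  have hB : ∀ j, qN N ^ m * z ^ 2 - qN N ^ j ≠ 0 := by
    intro j h
    apply hz2
    have h1 : (qN N ^ m * z ^ 2) ^ N = (qN N ^ j) ^ N := by rw [sub_eq_zero.1 h]
    rwa [mul_pow, ← pow_mul, ← pow_mul, ← pow_mul, mul_comm m, mul_comm j, pow_mul, pow_mul _ N j,
      hp.pow_eq_one, one_pow, one_pow, one_mul] at h1
  by_cases hE : Even N
  · set s := (α : ℂ) + β + 1
    set d := (α : ℂ) - β
    let τ : ℕ → ℂ := fun j => (s + (-1) ^ j * d) * (s + (-1) ^ (j + m) * d)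
    let Q : ℕ → ℂ := fun j => τ j * (qN N ^ m * z ^ 2 / (qN N ^ j - qN N ^ m * z ^ 2))
    have hQ : ∀ j, Q (j + N) = Q j := by
      intro j
      simp only [Q, τ]
      rw [show j + N + m = j + m + N by ring, pow_add _ j, pow_add _ (j + m) N, pow_add (qN N) j,
        hE.neg_one_pow, hp.pow_eq_one]
      simp
    have hQm : ∀ j, Q (j + m) = τ j * (z ^ 2 / (qN N ^ j - z ^ 2)) := by
      intro j
      have hk := aux_ne N j hN z hz2
      have hτ : τ (j + m) = τ j := by
        simp only [τ]
        rw [show (-1 : ℂ) ^ (j + m + m) = (-1) ^ j by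
          rw [add_assoc, ← two_mul, pow_add, pow_mul]; simp]
        ring
      simp only [Q]
      rw [hτ, pow_add, show qN N ^ j * qN N ^ m - qN N ^ m * z ^ 2
        = qN N ^ m * (qN N ^ j - z ^ 2) by ring, mul_div_mul_left _ _ (pow_ne_zero _ hq0)]
    have key : ∀ j ∈ Finset.range N, Acoef α β N j z * Acoef α β N (j + m) (qN N ^ j / z)
        = 1 / (qN N ^ m - 1) * (Q (j + m) - Q j) := by
      intro j _
      rw [hQm, aux_A_even _ _ _ _ hE, aux_A_even _ _ _ _ hE]
      have hk := aux_ne N j hN z hz2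
      have hb := hB j
      have hu : qN N ^ j ≠ 0 := pow_ne_zero _ hq0
      have hm1 : qN N ^ m - 1 ≠ 0 := sub_ne_zero.2 hqm
      simp only [Q, τ, s, d]
      rw [pow_add (qN N)]
      generalize (α : ℂ) + β + 1 + (-1) ^ j * ((α : ℂ) - β) = c1
      generalize (α : ℂ) + β + 1 + (-1) ^ (j + m) * ((α : ℂ) - β) = c2
      generalize qN N ^ j = u at *
      generalize qN N ^ m = v at *
      have e1 : u * v - (u / z) ^ 2 = u * (v * z ^ 2 - u) / z ^ 2 := by field_simp
      have e2 : u - v * z ^ 2 = - (v * z ^ 2 - u) := by ring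
      rw [e1, e2]
      generalize hD : v * z ^ 2 - u = D at *
      generalize hF : u - z ^ 2 = F at *
      field_simp
      subst hD hF
      ring
    rw [Finset.sum_congr rfl key, ← Finset.mul_sum, Finset.sum_sub_distrib, aux_shift N Q hQ m,
      sub_self, mul_zero]
  · obtain ⟨r, hr, h2, h⟩ := aux_A_odd α β N hE
    set s := (α : ℂ) + β + 1
    set d := (α : ℂ) - β
    have hr0 : r ≠ 0 := by rintro rfl; exact hq0 (by rw [← h2]; simp)
    have hqr : ∀ j, qN N ^ j = (r ^ j) ^ 2 := fun j => by rw [← h2]; ring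
    let Q : ℕ → ℂ := fun j =>
      ((s ^ 2 + d ^ 2 * r ^ m) / ((r ^ m) ^ 2 - 1) * (r ^ m) ^ 2 * z ^ 2
        + s * d / (r ^ m - 1) * (r ^ j * r ^ m * z)) / ((r ^ j) ^ 2 - (r ^ m) ^ 2 * z ^ 2)
    have hQ : ∀ j, Q (j + N) = Q j := by
      intro j
      simp only [Q]
      rw [pow_add _ j, hr.pow_eq_one]
      simp
    have hQm : ∀ j, Q (j + m) = ((s ^ 2 + d ^ 2 * r ^ m) / ((r ^ m) ^ 2 - 1) * z ^ 2
        + s * d / (r ^ m - 1) * (r ^ j * z)) / ((r ^ j) ^ 2 - z ^ 2) := by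
      intro j
      simp only [Q]
      have hy : (r ^ m) ^ 2 ≠ 0 := pow_ne_zero _ (pow_ne_zero _ hr0)
      rw [pow_add]
      rw [← mul_div_mul_left _ ((r ^ j) ^ 2 - z ^ 2) hy]
      congr 1 <;> ring
    have key : ∀ j ∈ Finset.range N, Acoef α β N j z * Acoef α β N (j + m) (qN N ^ j / z)
        = Q (j + m) - Q j := by
      intro j _
      rw [hQm, h, h]
      have hk := aux_ne N j hN z hz2
      have hb := hB j
      have hu : r ^ j ≠ 0 := pow_ne_zero _ hr0
      have hm1 : qN N ^ m - 1 ≠ 0 := sub_ne_zero.2 hqm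
      simp only [Q]
      rw [hqr] at hk hm1 hb ⊢
      rw [hqr] at hb
      rw [pow_add r]
      generalize r ^ j = x at *
      generalize r ^ m = y at *
      have n1 : y - 1 ≠ 0 := fun h => hm1 (by linear_combination (y + 1) * h)
      have n2 : y + 1 ≠ 0 := fun h => hm1 (by linear_combination (y - 1) * h)
      have e1 : (x * y) ^ 2 - (x ^ 2 / z) ^ 2 = x ^ 2 * (y ^ 2 * z ^ 2 - x ^ 2) / z ^ 2 := by
        field_simp
      have e2 : x ^ 2 - y ^ 2 * z ^ 2 = - (y ^ 2 * z ^ 2 - x ^ 2) := by ring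
      have e3 : y ^ 2 - 1 = (y - 1) * (y + 1) := by ring
      rw [e1, e2, e3]
      generalize hD : y ^ 2 * z ^ 2 - x ^ 2 = D at *
      generalize hF : x ^ 2 - z ^ 2 = F at *
      field_simp
      subst hD hF
      ring
    rw [Finset.sum_congr rfl key, Finset.sum_sub_distrib, aux_shift N Q hQ m, sub_self]

lemma aux_A_diff (α β : ℝ) (N k : ℕ) (hN : 1 ≤ N) (z : ℂ) (hz2 : z ^ (2 * N) ≠ 1) :
    DifferentiableAt ℂ (fun w => Acoef α β N k w) z := by
  have := aux_ne N k hN z hz2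
  unfold Acoef
  split_ifs <;> fun_prop (disch := assumption)

lemma aux_f_diff (f : ℂ → ℂ) (hf : IsLaurentPoly f) : DifferentiableOn ℂ f {0}ᶜ := by
  obtain ⟨m, p, h⟩ := hf
  have : DifferentiableOn ℂ (fun z => Polynomial.eval z p / z ^ m) {0}ᶜ := by
    intro z hz
    apply DifferentiableAt.differentiableWithinAt
    exact p.differentiableAt.div (by fun_prop) (pow_ne_zero _ hz)
  exact this.congr fun z hz => h z hz

lemma aux_B (α β : ℝ) (N j : ℕ) (hN : 1 ≤ N) (z : ℂ) (hz : z ≠ 0) (hz2 : z ^ (2 * N) ≠ 1) :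
    Bfun α β N (qN N ^ j / z) = N * ((α : ℂ) + β + 1) - Bfun α β N z := by
  have hp := aux_q_prim N hN
  have e : (qN N ^ j / z) ^ N = 1 / z ^ N := by
    rw [div_pow, ← pow_mul, mul_comm, pow_mul, hp.pow_eq_one, one_pow]
  have e2 : ∀ x : ℂ, x ^ (2 * N) = (x ^ N) ^ 2 := fun x => by ring
  unfold Bfun
  rw [e2] at hz2
  rw [e2, e2, e]
  have ht : z ^ N ≠ 0 := pow_ne_zero _ hz
  generalize z ^ N = t at *
  have d : t ^ 2 - 1 ≠ 0 := sub_ne_zero.2 hz2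
  have : (1 / t) ^ 2 - 1 = - (t ^ 2 - 1) / t ^ 2 := by field_simp; ring
  rw [this]
  field_simp
  ring

/-- explicit form of H(N) = L(N)² - N(α+β+1)L(N) on Laurent polynomials. -/
theorem stmt_16 (α β : ℝ) (N : ℕ) (hN : 1 ≤ N) (f : ℂ → ℂ) (hf : IsLaurentPoly f)
    (z : ℂ) (hz : z ≠ 0) (hz2 : z ^ (2 * N) ≠ 1) :
    Lop α β N (Lop α β N f) z - (N : ℂ) * ((α : ℂ) + β + 1) * Lop α β N f z
      = z ^ 2 * deriv (deriv f) z
        + z * (1 + (N : ℂ) * ((α : ℂ) + β + 1)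
            + 2 * (N : ℂ) * (((α : ℂ) + β + 1) + ((α : ℂ) - β) * z ^ N)
              / (z ^ (2 * N) - 1)) * deriv f z
        + z * ∑ k ∈ Finset.range N,
            deriv (fun w => Acoef α β N k w) z * (f (qN N ^ k / z) - f z) := by
  have hp := aux_q_prim N hN
  have hq0 : qN N ≠ 0 := Complex.exp_ne_zero _
  have hfo := aux_f_diff f hf
  have ho : IsOpen ({0}ᶜ : Set ℂ) := isOpen_compl_singleton
  have hfd : ∀ w : ℂ, w ≠ 0 → DifferentiableAt ℂ f w := fun w hw =>
    hfo.differentiableAt (ho.mem_nhds hw)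
  have hfdd : ∀ w : ℂ, w ≠ 0 → DifferentiableAt ℂ (deriv f) w := fun w hw =>
    (hfo.deriv ho).differentiableAt (ho.mem_nhds hw)
  -- derivative of L f
  have hder : deriv (Lop α β N f) z = deriv f z + z * deriv (deriv f) z
      + ∑ k ∈ Finset.range N, (deriv (fun w => Acoef α β N k w) z * (f (qN N ^ k / z) - f z)
        + Acoef α β N k z * (deriv f (qN N ^ k / z) * (-(qN N ^ k) / z ^ 2) - deriv f z)) := by
    apply HasDerivAt.deriv
    unfold Lop
    apply HasDerivAt.add
    · have := (hasDerivAt_id' z).fun_mul (hfdd z hz).hasDerivAt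
      simpa using this
    · apply HasDerivAt.fun_sum
      intro k _
      refine (aux_A_diff α β N k hN z hz2).hasDerivAt.mul ?_
      refine HasDerivAt.sub ?_ (hfd z hz).hasDerivAt
      have h1 : HasDerivAt (fun w : ℂ => qN N ^ k / w) (-(qN N ^ k) / z ^ 2) z := by
        have := (hasDerivAt_const z (qN N ^ k)).fun_div (hasDerivAt_id' z) hz
        simpa using this
      exact HasDerivAt.comp z (hfd _ (div_ne_zero (pow_ne_zero _ hq0) hz)).hasDerivAt h1
  have hS := aux_sum α β N hN z hz2
  -- the double sum
  have hdouble : ∑ j ∈ Finset.range N, Acoef α β N j z *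
      ∑ k ∈ Finset.range N, Acoef α β N k (qN N ^ j / z)
        * (f (qN N ^ k / (qN N ^ j / z)) - f z) = 0 := by
    have h1 : ∀ j ∈ Finset.range N, Acoef α β N j z *
      ∑ k ∈ Finset.range N, Acoef α β N k (qN N ^ j / z)
        * (f (qN N ^ k / (qN N ^ j / z)) - f z) = ∑ m ∈ Finset.range N,
        Acoef α β N j z * Acoef α β N (j + m) (qN N ^ j / z) * (f (qN N ^ m * z) - f z) := by
      intro j _
      rw [← aux_shift N _ _ j, Finset.mul_sum]
      · apply Finset.sum_congr rfl
        intro m _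
        have : qN N ^ (m + j) / (qN N ^ j / z) = qN N ^ m * z := by
          have := pow_ne_zero j hq0
          rw [pow_add]
          field_simp
        rw [this, add_comm m j, mul_assoc]
      · intro k
        rw [aux_periodic _ _ _ _ hN, pow_add, hp.pow_eq_one, mul_one]
    rw [Finset.sum_congr rfl h1, Finset.sum_comm]
    apply Finset.sum_eq_zero
    intro m hm
    rw [← Finset.sum_mul]
    by_cases hm0 : m = 0
    · subst hm0; simp
    · rw [aux_cross α β N hN z hz hz2 m hm0 (Finset.mem_range.1 hm), zero_mul]
  have hinner : ∀ j ∈ Finset.range N, Acoef α β N j z * (Lop α β N f (qN N ^ j / z) - Lop α β N f z)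
      = Acoef α β N j z * (qN N ^ j / z * deriv f (qN N ^ j / z))
        + Acoef α β N j z * ∑ k ∈ Finset.range N, Acoef α β N k (qN N ^ j / z)
        * (f (qN N ^ k / (qN N ^ j / z)) - f z)
        + (N * ((α : ℂ) + β + 1) - Bfun α β N z) * (Acoef α β N j z * (f (qN N ^ j / z) - f z))
        - Acoef α β N j z * Lop α β N f z := by
    intro j _
    have hj : (qN N ^ j / z) ^ (2 * N) ≠ 1 := by
      rw [div_pow, ← pow_mul, show j * (2 * N) = N * (2 * j) by ring, pow_mul, hp.pow_eq_one,
        one_pow]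
      intro h
      rw [div_eq_iff (pow_ne_zero _ hz)] at h
      exact hz2 (by rw [h, one_mul])
    have h1 := aux_sum α β N hN _ hj
    rw [aux_B α β N j hN z hz hz2] at h1
    have h2 : Lop α β N f (qN N ^ j / z) = qN N ^ j / z * deriv f (qN N ^ j / z)
        + (∑ k ∈ Finset.range N, Acoef α β N k (qN N ^ j / z)
          * (f (qN N ^ k / (qN N ^ j / z)) - f z)
        + (∑ k ∈ Finset.range N, Acoef α β N k (qN N ^ j / z)) * (f z - f (qN N ^ j / z))) := by
      rw [Finset.sum_mul, ← Finset.sum_add_distrib]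
      unfold Lop
      congr 1
      apply Finset.sum_congr rfl
      intro k _
      ring
    rw [h2, h1]
    ring
  have hL : Lop α β N (Lop α β N f) z = z * deriv (Lop α β N f) z
      + ∑ j ∈ Finset.range N, Acoef α β N j z * (Lop α β N f (qN N ^ j / z) - Lop α β N f z) := rfl
  have hsplit : ∑ k ∈ Finset.range N,
      (deriv (fun w => Acoef α β N k w) z * (f (qN N ^ k / z) - f z)
        + Acoef α β N k z * (deriv f (qN N ^ k / z) * (-(qN N ^ k) / z ^ 2) - deriv f z))
      = ∑ k ∈ Finset.range N, deriv (fun w => Acoef α β N k w) z * (f (qN N ^ k / z) - f z)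
        - (∑ k ∈ Finset.range N, Acoef α β N k z * (qN N ^ k / z * deriv f (qN N ^ k / z))) / z
        - (∑ k ∈ Finset.range N, Acoef α β N k z) * deriv f z := by
    rw [Finset.sum_mul, Finset.sum_div, ← Finset.sum_sub_distrib, ← Finset.sum_sub_distrib]
    apply Finset.sum_congr rfl
    intro k _
    field_simp
    ring
  rw [hL, Finset.sum_congr rfl hinner, Finset.sum_sub_distrib, Finset.sum_add_distrib,
    Finset.sum_add_distrib, hdouble, hder, hsplit, ← Finset.sum_mul, ← Finset.mul_sum, hS]
  have hLf : Lop α β N f z = z * deriv f z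
    + ∑ k ∈ Finset.range N, Acoef α β N k z * (f (qN N ^ k / z) - f z) := rfl
  rw [hLf]
  have hBC : 1 + (N : ℂ) * ((α : ℂ) + β + 1)
            + 2 * (N : ℂ) * (((α : ℂ) + β + 1) + ((α : ℂ) - β) * z ^ N)
              / (z ^ (2 * N) - 1) = 1 + 2 * Bfun α β N z - N * ((α : ℂ) + β + 1) := by
    unfold Bfun
    have d : z ^ (2 * N) - 1 ≠ 0 := sub_ne_zero.2 hz2
    generalize z ^ (2 * N) = t at *
    field_simp
    ring
  rw [hBC]
  generalize ∑ k ∈ Finset.range N, Acoef α β N k z * (qN N ^ k / z * deriv f (qN N ^ k / z)) = X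
  generalize ∑ k ∈ Finset.range N, Acoef α β N k z * (f (qN N ^ k / z) - f z) = Y
  generalize ∑ k ∈ Finset.range N,
    deriv (fun w => Acoef α β N k w) z * (f (qN N ^ k / z) - f z) = W
  field_simp
  ring
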